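/- Let 𝒜 be a reduced inverse automaton over Ã, let H = L(𝒜)ρ, and let u and v be reduced words labeling paths q →v q₀ →u p in 𝒜, where p ≠ q. Suppose 𝒜 →i^{p=q} 𝓑. Then 𝒜 →e^{uv} 𝓑 and L(𝓑)ρ = ⟨H, (uv)ρ⟩. In particular, rank(L(𝓑)ρ) ≤ 1 + rank(H); and if rank(L(𝓑)ρ) = 1 + rank(H), then H is a free factor of L(𝓑)ρ and, for every basis C of H, C ∪ {(uv)ρ} is a basis of L(𝓑)ρ. -/

import Mathlib

open Function

/-- A letter of the symmetrized alphabet Ã: `(a, true)` stands for `a ∈ A` and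
`(a, false)` for `a⁻¹ ∈ A⁻¹`. -/
abbrev Ltr (A : Type) := A × Bool

/-- Inversion of letters of Ã. -/
def Ltr.inv {A : Type} (x : Ltr A) : Ltr A := (x.1, !x.2)

/-- The inverse `u⁻¹` of a word `u` over Ã. -/
def wordInv {A : Type} (w : List (Ltr A)) : List (Ltr A) := (w.map Ltr.inv).reverse

/-- A word over Ã is reduced iff it has no factor of the form `a a⁻¹` or `a⁻¹ a`. -/
def IsReducedWord {A : Type} (w : List (Ltr A)) : Prop :=
  ∀ (u v : List (Ltr A)) (a : A) (b : Bool), w ≠ u ++ (a, b) :: (a, !b) :: v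

/-- An automaton over the symmetrized alphabet Ã, with a bundled state type `Q`,
an initial state `q0` and a set `E` of transitions. -/
structure Autom (A : Type) : Type 1 where
  Q : Type
  q0 : Q
  E : Set (Q × Ltr A × Q)

namespace Autom

variable {A : Type}

/-- Paths using only transitions in the set `T`. -/
inductive PathOn (M : Autom A) (T : Set (M.Q × Ltr A × M.Q)) :
    M.Q → List (Ltr A) → M.Q → Prop
  | nil (q : M.Q) : PathOn M T q [] q
  | cons {p q r : M.Q} {a : Ltr A} {w : List (Ltr A)} :
      (p, a, q) ∈ T → PathOn M T q w r → PathOn M T p (a :: w) r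

/-- `M.Path p u q` : the word `u` labels a path from state `p` to state `q` in `M`. -/
def Path (M : Autom A) : M.Q → List (Ltr A) → M.Q → Prop := M.PathOn M.E

/-- The language L(𝒜) of words labeling a path from `q0` to `q0`. -/
def lang (M : Autom A) : Set (List (Ltr A)) := {w | M.Path M.q0 w M.q0}

/-- The set L(𝒜)ρ of reductions (in the free group `F(A)`) of words of L(𝒜). -/
def langRho (M : Autom A) : Set (FreeGroup A) := FreeGroup.mk '' M.lang

/-- Dual automaton: `(p,a,q)` is an edge iff `(q,a⁻¹,p)` is one. -/
def Dual (M : Autom A) : Prop := ∀ p a q, (p, a, q) ∈ M.E ↔ (q, Ltr.inv a, p) ∈ M.E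

/-- Deterministic automaton. -/
def Deterministic (M : Autom A) : Prop :=
  ∀ p a q q', (p, a, q) ∈ M.E → (p, a, q') ∈ M.E → q = q'

/-- Trim automaton: every state lies on a path from `q0` to `q0`. -/
def Trim (M : Autom A) : Prop := ∀ q, ∃ u v, M.Path M.q0 u q ∧ M.Path q v M.q0

/-- Inverse automaton: deterministic, trim and dual. -/
def IsInv (M : Autom A) : Prop := M.Deterministic ∧ M.Trim ∧ M.Dual

/-- Reduced automaton: every state lies on a path from `q0` to `q0` labeled by
a reduced word. -/
def IsRed (M : Autom A) : Prop :=
  ∀ q, ∃ u v, IsReducedWord (u ++ v) ∧ M.Path M.q0 u q ∧ M.Path q v M.q0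

/-- Homomorphisms of automata. -/
def IsHom (M N : Autom A) (φ : M.Q → N.Q) : Prop :=
  φ M.q0 = N.q0 ∧ ∀ p a q, (p, a, q) ∈ M.E → (φ p, a, φ q) ∈ N.E

/-- Isomorphism of automata. -/
def Isomorphic (M N : Autom A) : Prop :=
  ∃ φ : M.Q ≃ N.Q, M.IsHom N φ ∧ N.IsHom M φ.symm

/-- `N` is (isomorphic to) the automaton obtained from `M` by identifying the two
states `p` and `q`. -/
def IsIdentification (M : Autom A) (p q : M.Q) (N : Autom A) : Prop :=
  ∃ φ : M.Q → N.Q,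
    Surjective φ ∧ φ M.q0 = N.q0 ∧
    (∀ x y, φ x = φ y ↔ x = y ∨ (x = p ∧ y = q) ∨ (x = q ∧ y = p)) ∧
    (∀ e : N.Q × Ltr A × N.Q, e ∈ N.E ↔ ∃ e' ∈ M.E, e = (φ e'.1, e'.2.1, φ e'.2.2))

/-- `N` is (isomorphic to) the automaton obtained from `M` by deleting the state `q`
and all transitions involving it. -/
def IsDeletion (M : Autom A) (q : M.Q) (N : Autom A) : Prop :=
  ∃ φ : N.Q → M.Q,
    Injective φ ∧ Set.range φ = {x | x ≠ q} ∧ φ N.q0 = M.q0 ∧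
    (∀ e : N.Q × Ltr A × N.Q, e ∈ N.E ↔ (φ e.1, e.2.1, φ e.2.2) ∈ M.E)

/-- Elementary reduction of type 1. -/
def Red1 (M N : Autom A) : Prop :=
  ∃ p q r a, p ≠ q ∧ (r, a, p) ∈ M.E ∧ (r, a, q) ∈ M.E ∧ M.IsIdentification p q N

/-- Elementary reduction of type 2. -/
def Red2 (M N : Autom A) : Prop :=
  ∃ (p q : M.Q) (a : Ltr A), q ≠ M.q0 ∧ (p, a, q) ∈ M.E ∧ (q, Ltr.inv a, p) ∈ M.E ∧
    (∀ e ∈ M.E, e.1 = q ∨ e.2.2 = q → e = (p, a, q) ∨ e = (q, Ltr.inv a, p)) ∧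
    M.IsDeletion q N

/-- `N` is (isomorphic to) the reduction `Mρ` of `M`: perform elementary reductions
of type 1 until the automaton is deterministic, then elementary reductions of type 2
until none is possible. -/
def ReductionOf (M N : Autom A) : Prop :=
  ∃ M₁, Relation.ReflTransGen Red1 M M₁ ∧ M₁.Deterministic ∧
    Relation.ReflTransGen Red2 M₁ N ∧ ∀ N', ¬ Red2 N N'

/-- `N` is (isomorphic to) the expansion of `M` by `(p, w, q)`: a new path labeled `w`
from `p` to `q` (together with its inverse path) whose intermediate states are new. -/
def IsExpansion (M : Autom A) (p : M.Q) (w : List (Ltr A)) (q : M.Q) (N : Autom A) : Prop :=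
  w ≠ [] ∧
  ∃ (φ : M.Q → N.Q) (c : Fin (w.length + 1) → N.Q),
    Injective φ ∧ φ M.q0 = N.q0 ∧ c 0 = φ p ∧ c (Fin.last w.length) = φ q ∧
    (∀ i : Fin (w.length + 1), 0 < (i : ℕ) → (i : ℕ) < w.length → c i ∉ Set.range φ) ∧
    (∀ i j : Fin (w.length + 1), 0 < (i : ℕ) → (i : ℕ) < w.length → c i = c j → i = j) ∧
    (∀ x : N.Q, (∃ y, φ y = x) ∨ ∃ i, c i = x) ∧
    (∀ e : N.Q × Ltr A × N.Q, e ∈ N.E ↔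
      ((∃ e' ∈ M.E, e = (φ e'.1, e'.2.1, φ e'.2.2)) ∨
        ∃ i : Fin w.length,
          e = (c i.castSucc, w.get i, c i.succ) ∨
          e = (c i.succ, Ltr.inv (w.get i), c i.castSucc)))

/-- `M →exp^{(p,w,q)} N` : `N` is (isomorphic to) the reduction of the expansion
of `M` by `(p,w,q)`. -/
def ExpStep (M : Autom A) (p : M.Q) (w : List (Ltr A)) (q : M.Q) (N : Autom A) : Prop :=
  ∃ N' N'', M.IsExpansion p w q N' ∧ ReductionOf N' N'' ∧ Isomorphic N'' N

/-- `M →re^{(p,w,q)} N` : a reduced expansion, i.e. an expansion-then-reduction in which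
`M` embeds in `N`. -/
def REStep (M : Autom A) (p : M.Q) (w : List (Ltr A)) (q : M.Q) (N : Autom A) : Prop :=
  M.ExpStep p w q N ∧ ∃ ψ : M.Q → N.Q, Injective ψ ∧ M.IsHom N ψ

/-- `M →e^{w} N` : an e-step, i.e. `M →exp^{(q0,w,q0)} N`. -/
def EStep (M : Autom A) (w : List (Ltr A)) (N : Autom A) : Prop :=
  M.ExpStep M.q0 w M.q0 N

/-- `M →i^{p=q} N` : an i-step; `N` is (isomorphic to) the reduction of the automaton
obtained from `M` by identifying the distinct states `p` and `q`. -/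
def IStep (M : Autom A) (p q : M.Q) (N : Autom A) : Prop :=
  p ≠ q ∧ ∃ N' N'', M.IsIdentification p q N' ∧ ReductionOf N' N'' ∧ Isomorphic N'' N

/-- i-step, allowing `p = q` (in which case nothing happens). -/
def IStep' (M : Autom A) (p q : M.Q) (N : Autom A) : Prop :=
  (p = q ∧ M.Isomorphic N) ∨ M.IStep p q N

/-- `M →i N` : some i-step applies. -/
def IStepAny (M N : Autom A) : Prop := ∃ p q, M.IStep p q N

/-- Some reduced expansion (by a nonempty reduced word) applies. -/
def REStepAny (M N : Autom A) : Prop :=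
  ∃ p w q, IsReducedWord w ∧ M.REStep p w q N

/-- `M` is (isomorphic to) `Γ_A(H)` : a reduced inverse automaton with `L(M)ρ = H`. -/
def Represents (M : Autom A) (H : Subgroup (FreeGroup A)) : Prop :=
  M.IsInv ∧ M.IsRed ∧ M.langRho = ↑H

/-- The `q0`-diameter of an automaton: the maximum over all states `q` of the minimal
length of a reduced word labeling a path from `q0` to `q`. -/
noncomputable def diam (M : Autom A) : ℕ :=
  ⨆ q : M.Q, sInf {n | ∃ u, IsReducedWord u ∧ u.length = n ∧ M.Path M.q0 u q}

end Autom

/-- `S` is a basis of the subgroup `H`: `S` generates `H` and freely so. -/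
def IsFreeBasis {G : Type} [Group G] (S : Set G) (H : Subgroup G) : Prop :=
  Subgroup.closure S = H ∧
    Injective (FreeGroup.lift (Subtype.val : S → G) : FreeGroup S →* G)

/-- `H ≤ff K` : `H` is a free factor of `K`. -/
def FreeFactor {G : Type} [Group G] (H K : Subgroup G) : Prop :=
  ∃ B C : Set G, IsFreeBasis B H ∧ IsFreeBasis C K ∧ B ⊆ C

/-- The rank of a subgroup: the cardinality of a basis (the common value of
the cardinalities of all bases, when `H` is a finite-rank free group). -/
noncomputable def rk {G : Type} [Group G] (H : Subgroup G) : ℕ :=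
  sInf {n | ∃ S : Set G, IsFreeBasis S H ∧ S.ncard = n}

/-- `L` is a graphical free factor of `K` with respect to `A`: `Γ_A(L)` embeds
in `Γ_A(K)`. -/
def GraphicalFF {A : Type} (L K : Subgroup (FreeGroup A)) : Prop :=
  L ≤ K ∧ ∃ ML MK : Autom A, ML.Represents L ∧ MK.Represents K ∧
    ∃ ψ : ML.Q → MK.Q, Injective ψ ∧ ML.IsHom MK ψ

/-- A step (i-step or reduced expansion) from `M` to `N` of cost `c`. -/
def StepCost {A : Type} (M N : Autom A) (c : ℕ) : Prop :=
  (c = 0 ∧ Autom.IStepAny M N) ∨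
  (∃ p w q, IsReducedWord w ∧ w.length = c ∧ M.REStep p w q N)

/-- The well-order `≺` on cost sequences. -/
def costLT (k l : List ℕ) : Prop :=
  k.length < l.length ∨
  (k.length = l.length ∧ k.sum < l.sum) ∨
  (k.length = l.length ∧ k.sum = l.sum ∧ List.Lex (· < ·) k l)

/-!
Let `P` be the automaton obtained from `M` by identifying `p` and `q`, and `X` the expansion of `M`
by the loop `uv` at `q0`. In `X` the new path can be folded onto the paths labelled `u` and `v` of
`M`; its midpoint is folded onto both `p` and `q`, so the result is a quotient of `P`. Any
determinization of `P` can thus be continued from there, and by its universal property it agrees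
with the determinization of `X`.

Writing `g` for `(uv)ρ` and `K` for `⟨H, g⟩`, every basis `C` of `H` yields the generating set
`C ∪ {g}` of `K`; if it has exactly `rank K` elements, it is a basis since free groups of finite
rank are Hopfian, by residual finiteness. When `K` is not finitely generated, its rank is `0` by
convention, and the rank statements could fail. So one checks that `H` is finitely generated as soon
as `K` is: `H` and `K` are defined by automata differing by finitely many identifications of states,
and a reduced inverse automaton has finitely many edges iff its group is finitely generated.
-/

section FreeGroups

theorem exists_perm_of_biUnique {X : Type*} [Finite X] {R : X → X → Prop}
    (hR : Relator.BiUnique R) : ∃ σ : Equiv.Perm X, ∀ x y, R x y → σ x = y := by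
  classical
  have := Fintype.ofFinite X
  choose f hf using fun x : {x // ∃ y, R x y} => x.2
  let g : {x // ∃ y, R x y} → {y // ∃ x, R x y} := fun x => ⟨f x, x, hf x⟩
  have hg : Bijective g := by
    refine ⟨fun x x' h => Subtype.ext (hR.1 (hf x) ?_), ?_⟩
    · rw [show f x = f x' from congrArg Subtype.val h]
      exact hf x'
    · rintro ⟨y, x, hxy⟩
      exact ⟨⟨x, y, hxy⟩, Subtype.ext (hR.2 (hf _) hxy)⟩
  refine ⟨(Equiv.ofBijective g hg).extendSubtype, fun x y hxy => ?_⟩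
  rw [Equiv.extendSubtype_apply_of_mem _ x ⟨y, hxy⟩]
  exact hR.2 (hf _) hxy

/-- The positions `0, …, |w|` of a word `w` over the generators and their inverses form a path
labeled by `w`; `WordStep w a x y` says that the letter `a` moves position `x` to position `y`.
Groups act on the left, so the path is run from its end to its start. -/
def WordStep {α : Type*} (w : List (α × Bool)) (a : α) (x y : Fin (w.length + 1)) : Prop :=
  (w[(y : ℕ)]? = some (a, true) ∧ (x : ℕ) = y + 1) ∨
    (w[(x : ℕ)]? = some (a, false) ∧ (y : ℕ) = x + 1)

theorem biUnique_wordStep {α : Type*} {w : List (α × Bool)} (hw : FreeGroup.IsReduced w) (a : α) :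
    Relator.BiUnique (WordStep w a) := by
  have hne : ∀ i b, w[i]? = some (a, b) → w[i + 1]? ≠ some (a, !b) := by
    intro i b h h'
    obtain ⟨hi, hib⟩ := List.getElem?_eq_some_iff.1 h'
    obtain ⟨_, hia⟩ := List.getElem?_eq_some_iff.1 h
    simpa [hia, hib] using List.isChain_iff_getElem.1 hw i hi
  have := (hne · true)
  have := (hne · false)
  constructor <;> intro x y z h h' <;> simp only [WordStep] at h h' <;> grind

theorem lift_mk_apply_last {α : Type*} {w : List (α × Bool)}
    {σ : α → Equiv.Perm (Fin (w.length + 1))} (hσ : ∀ a x y, WordStep w a x y → σ a x = y)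
    {w₁ w₂ : List (α × Bool)} (hw : w = w₁ ++ w₂) :
    (FreeGroup.lift σ (FreeGroup.mk w₂) (Fin.last w.length) : ℕ) = w₁.length := by
  induction w₂ generalizing w₁ with
  | nil => simp [hw, ← FreeGroup.one_eq_mk]
  | cons x w₂ ih =>
    obtain ⟨a, b⟩ := x
    have ih := ih (w₁ := w₁ ++ [(a, b)]) (by simp [hw])
    have hlt : w₁.length < w.length + 1 := by simp [hw]
    have hget : w[w₁.length]? = some (a, b) := by simp [hw]
    rw [← List.singleton_append, ← FreeGroup.mul_mk, map_mul, Equiv.Perm.mul_apply]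
    set i := FreeGroup.lift σ (FreeGroup.mk w₂) (Fin.last w.length)
    have hi : (i : ℕ) = w₁.length + 1 := by simpa using ih
    suffices FreeGroup.lift σ (FreeGroup.mk [(a, b)]) i = ⟨w₁.length, hlt⟩ by rw [this]
    cases b
    · have := hσ a ⟨w₁.length, hlt⟩ i (.inr ⟨hget, hi⟩)
      simp [Equiv.symm_apply_eq, this]
    · simpa using hσ a i ⟨w₁.length, hlt⟩ (.inl ⟨hget, hi⟩)

instance residuallyFinite_freeGroup {α : Type*} : Group.ResiduallyFinite (FreeGroup α) := by
  classical
  refine Group.residuallyFinite_of_forall_exists_finite_monoidHom fun g hg => ?_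
  choose σ hσ using fun a =>
    exists_perm_of_biUnique (biUnique_wordStep (FreeGroup.isReduced_toWord (x := g)) a)
  refine ⟨_, inferInstance, inferInstance, FreeGroup.lift σ, fun h => hg ?_⟩
  have hlen := lift_mk_apply_last hσ (List.nil_append g.toWord).symm
  rw [FreeGroup.mk_toWord, h] at hlen
  exact FreeGroup.toWord_eq_nil_iff.1 (List.length_eq_zero_iff.1 hlen)

theorem finite_monoidHom_of_fg (G P : Type*) [Group G] [Group.FG G] [Group P] [Finite P] :
    Finite (G →* P) := by
  obtain ⟨S, hS⟩ := Group.FG.out (G := G)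
  refine Finite.of_injective (fun f : G →* P => fun s : S => f s) fun f f' h => ?_
  refine MonoidHom.eq_of_eqOn_top fun x _ => ?_
  exact MonoidHom.eqOn_closure (fun s hs => congrFun h ⟨s, hs⟩) (hS ▸ Subgroup.mem_top x)

/-- Malcev's theorem: precomposition with `f` is an injective, hence surjective, self-map of the
finite set of homomorphisms from `G` to a given finite group, so each of them kills `ker f`. -/
theorem injective_of_surjective_of_residuallyFinite {G : Type*} [Group G] [Group.FG G]
    [Group.ResiduallyFinite G] {f : G →* G} (hf : Surjective f) : Injective f := by
  refine (injective_iff_map_eq_one f).2 fun g hg => ?_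
  refine Group.eq_one_iff_forall_finiteIndexNormalSubroup g fun N => ?_
  have := finite_monoidHom_of_fg G (G ⧸ N.toSubgroup)
  have hinj : Injective fun θ : G →* G ⧸ N.toSubgroup => θ.comp f :=
    fun _ _ => (MonoidHom.cancel_right hf).1
  obtain ⟨θ, hθ⟩ := Finite.surjective_of_injective hinj (QuotientGroup.mk' N.toSubgroup)
  have : (g : G ⧸ N.toSubgroup) = 1 := by
    rw [← QuotientGroup.mk'_apply, ← hθ]
    simp [hg]
  exact (QuotientGroup.eq_one_iff g).1 this

theorem finite_of_freeGroup_surjective {S T : Type*} [Finite T] {f : FreeGroup T →* FreeGroup S}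
    (hf : Surjective f) : Finite S ∧ Nat.card S ≤ Nat.card T := by
  classical
  let P := Multiplicative (ZMod 2)
  have hinj : Injective fun h : S → P => FreeGroup.lift.symm ((FreeGroup.lift h).comp f) :=
    fun _ _ h => FreeGroup.lift.injective
      ((MonoidHom.cancel_right hf).1 (FreeGroup.lift.symm.injective h))
  have : Finite (S → P) := .of_injective _ hinj
  have hne : (Multiplicative.ofAdd 1 : P) ≠ 1 := by decide
  have : Finite S := .of_injective (fun s => (Pi.mulSingle s (.ofAdd 1) : S → P))
    fun s s' h => by simpa [Pi.mulSingle_apply, hne] using congrFun h s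
  refine ⟨this, ?_⟩
  have hcard := Nat.card_le_card_of_injective _ hinj
  rw [Nat.card_fun, Nat.card_fun] at hcard
  exact (Nat.pow_le_pow_iff_right (by simp [P])).1 hcard

theorem freeGroup_injective_of_surjective {S T : Type*} [Finite T]
    (hcard : Nat.card T ≤ Nat.card S) {f : FreeGroup T →* FreeGroup S} (hf : Surjective f) :
    Injective f := by
  obtain ⟨_, hle⟩ := finite_of_freeGroup_surjective hf
  obtain ⟨e⟩ := Finite.card_eq.1 (hle.antisymm hcard)
  let e' := FreeGroup.freeGroupCongr e
  have : Surjective (e'.toMonoidHom.comp f) := e'.surjective.comp hf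
  exact .of_comp (f := e') (injective_of_surjective_of_residuallyFinite this)

end FreeGroups

section Bases

variable {G : Type} [Group G] {H K : Subgroup G} {S T C : Set G} {g : G}

theorem range_lift_val (S : Set G) :
    (FreeGroup.lift (Subtype.val : S → G)).range = Subgroup.closure S := by
  rw [FreeGroup.range_lift_eq_closure, Subtype.range_coe]

theorem exists_isFreeBasis (K : Subgroup G) [IsFreeGroup K] : ∃ S, IsFreeBasis S K := by
  let b := IsFreeGroup.basis K
  let S := Set.range fun i => (b i : G)
  let e := Equiv.ofInjective (fun i => (b i : G)) (Subtype.val_injective.comp b.injective)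
  let b' : FreeGroupBasis S K := b.reindex e
  have hb' : FreeGroup.lift (Subtype.val : S → G) = K.subtype.comp b'.repr.symm.toMonoidHom :=
    FreeGroup.ext_hom _ _ fun s => by
      rw [FreeGroup.lift_apply_of]
      exact (congrArg Subtype.val (e.apply_symm_apply s)).symm
  refine ⟨S, ?_, ?_⟩
  · rw [← range_lift_val, hb', MonoidHom.range_comp,
      MonoidHom.range_eq_top.2 b'.repr.symm.surjective, ← MonoidHom.range_eq_map, K.range_subtype]
  · rw [hb']
    exact Subtype.val_injective.comp b'.repr.symm.injective

namespace IsFreeBasis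

theorem exists_surjective_lift (hS : IsFreeBasis S K) (hT : Subgroup.closure T = K) :
    ∃ f : FreeGroup T →* FreeGroup S, Surjective f ∧
      (FreeGroup.lift (Subtype.val : S → G)).comp f = FreeGroup.lift (Subtype.val : T → G) := by
  have hrange : (FreeGroup.lift (Subtype.val : S → G)).range =
      (FreeGroup.lift (Subtype.val : T → G)).range := by
    rw [range_lift_val, range_lift_val, hS.1, hT]
  have hmem : ∀ t : T, ∃ y, FreeGroup.lift (Subtype.val : S → G) y = t := fun t =>
    (hrange ▸ ⟨FreeGroup.of t, by simp⟩ : (t : G) ∈ (FreeGroup.lift (Subtype.val : S → G)).range)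
  choose y hy using hmem
  have hcomp : (FreeGroup.lift (Subtype.val : S → G)).comp (FreeGroup.lift y) =
      FreeGroup.lift (Subtype.val : T → G) := FreeGroup.ext_hom _ _ fun t => by simp [hy]
  refine ⟨FreeGroup.lift y, fun z => ?_, hcomp⟩
  obtain ⟨x, hx⟩ : FreeGroup.lift Subtype.val z ∈ (FreeGroup.lift (Subtype.val : T → G)).range :=
    hrange ▸ ⟨z, rfl⟩
  exact ⟨x, hS.2 (by rw [← hx, ← hcomp, MonoidHom.comp_apply])⟩

theorem finite (hS : IsFreeBasis S K) (hK : K.FG) : S.Finite := by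
  obtain ⟨T, hT⟩ := hK
  obtain ⟨f, hf, -⟩ := hS.exists_surjective_lift hT
  exact (finite_of_freeGroup_surjective hf).1

theorem ncard_le (hS : IsFreeBasis S K) (hT : Subgroup.closure T = K) (hfin : T.Finite) :
    S.ncard ≤ T.ncard := by
  have := hfin.to_subtype
  obtain ⟨f, hf, -⟩ := hS.exists_surjective_lift hT
  exact (finite_of_freeGroup_surjective hf).2

theorem of_closure_eq (hS : IsFreeBasis S K) (hT : Subgroup.closure T = K) (hfin : T.Finite)
    (hcard : T.ncard ≤ S.ncard) : IsFreeBasis T K := by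
  have := hfin.to_subtype
  obtain ⟨f, hf, hcomp⟩ := hS.exists_surjective_lift hT
  refine ⟨hT, ?_⟩
  rw [← hcomp]
  exact hS.2.comp (freeGroup_injective_of_surjective hcard hf)

theorem fg (hS : IsFreeBasis S K) (hfin : S.Finite) : K.FG :=
  (Subgroup.fg_iff K).2 ⟨S, hS.1, hfin⟩

theorem exists_ncard_eq_rk (hS : IsFreeBasis S K) : ∃ T, IsFreeBasis T K ∧ T.ncard = rk K :=
  Nat.sInf_mem (s := {n | ∃ S : Set G, IsFreeBasis S K ∧ S.ncard = n}) ⟨_, S, hS, rfl⟩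

theorem ncard_eq_rk (hS : IsFreeBasis S K) (hK : K.FG) : S.ncard = rk K := by
  obtain ⟨T, hT, hTrk⟩ := hS.exists_ncard_eq_rk
  rw [← hTrk]
  exact (hS.ncard_le hT.1 (hT.finite hK)).antisymm (hT.ncard_le hS.1 (hS.finite hK))

theorem closure_union_singleton_eq (hC : IsFreeBasis C H) :
    Subgroup.closure (C ∪ {g}) = Subgroup.closure (↑H ∪ {g}) := by
  rw [Subgroup.closure_union, Subgroup.closure_union, hC.1, Subgroup.closure_eq]

theorem rk_eq_zero (hS : IsFreeBasis S K) (hK : ¬ K.FG) : rk K = 0 := by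
  obtain ⟨T, hT, hTrk⟩ := hS.exists_ncard_eq_rk
  rw [← hTrk]
  exact Set.Infinite.ncard fun hfin => hK (hT.fg hfin)

end IsFreeBasis

theorem rk_closure_union_singleton_le [IsFreeGroup G]
    (hfg : (Subgroup.closure (↑H ∪ {g})).FG → H.FG) :
    rk (Subgroup.closure (↑H ∪ {g})) ≤ 1 + rk H := by
  obtain ⟨S, hS⟩ := exists_isFreeBasis (Subgroup.closure (↑H ∪ {g}))
  by_cases hK : (Subgroup.closure (↑H ∪ {g})).FG
  · obtain ⟨C, hC⟩ := exists_isFreeBasis H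
    have hfin := (hC.finite (hfg hK)).union (Set.finite_singleton g)
    calc rk (Subgroup.closure (↑H ∪ {g})) = S.ncard := (hS.ncard_eq_rk hK).symm
      _ ≤ (C ∪ {g}).ncard := hS.ncard_le hC.closure_union_singleton_eq hfin
      _ ≤ C.ncard + ({g} : Set G).ncard := Set.ncard_union_le _ _
      _ = 1 + rk H := by rw [Set.ncard_singleton, hC.ncard_eq_rk (hfg hK), add_comm]
  · rw [hS.rk_eq_zero hK]
    exact Nat.zero_le _

theorem IsFreeBasis.union_singleton [IsFreeGroup G] (hC : IsFreeBasis C H)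
    (hfg : (Subgroup.closure (↑H ∪ {g})).FG → H.FG)
    (hrk : rk (Subgroup.closure (↑H ∪ {g})) = 1 + rk H) :
    IsFreeBasis (C ∪ {g}) (Subgroup.closure (↑H ∪ {g})) := by
  obtain ⟨S, hS⟩ := exists_isFreeBasis (Subgroup.closure (↑H ∪ {g}))
  have hK : (Subgroup.closure (↑H ∪ {g})).FG := by
    by_contra hK
    have := hS.rk_eq_zero hK
    omega
  refine hS.of_closure_eq hC.closure_union_singleton_eq
    ((hC.finite (hfg hK)).union (Set.finite_singleton g)) ?_
  calc (C ∪ {g}).ncard ≤ C.ncard + ({g} : Set G).ncard := Set.ncard_union_le _ _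
    _ = S.ncard := by
      rw [Set.ncard_singleton, hC.ncard_eq_rk (hfg hK), hS.ncard_eq_rk hK, hrk, add_comm]

theorem freeFactor_closure_union_singleton [IsFreeGroup G]
    (hfg : (Subgroup.closure (↑H ∪ {g})).FG → H.FG)
    (hrk : rk (Subgroup.closure (↑H ∪ {g})) = 1 + rk H) :
    FreeFactor H (Subgroup.closure (↑H ∪ {g})) := by
  obtain ⟨C, hC⟩ := exists_isFreeBasis H
  exact ⟨C, C ∪ {g}, hC, hC.union_singleton hfg hrk, Set.subset_union_left⟩

end Bases

section Words

variable {A : Type} {w : List (Ltr A)}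

theorem Ltr.inv_inv (a : Ltr A) : a.inv.inv = a := by simp [Ltr.inv]

theorem mk_wordInv (w : List (Ltr A)) : FreeGroup.mk (wordInv w) = (FreeGroup.mk w)⁻¹ :=
  FreeGroup.inv_mk.symm

theorem IsReducedWord.isReduced (hw : IsReducedWord w) : FreeGroup.IsReduced w := by
  refine FreeGroup.isReduced_iff_not_step.2 fun w' hstep => ?_
  cases hstep with
  | not => exact hw _ _ _ _ rfl

theorem isReduced_wordInv (hw : FreeGroup.IsReduced w) : FreeGroup.IsReduced (wordInv w) := by
  classical
  refine FreeGroup.IsReduced.of_reduce_eq ?_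
  change FreeGroup.reduce (FreeGroup.invRev w) = FreeGroup.invRev w
  rw [FreeGroup.reduce_invRev, hw.reduce_eq]

end Words

namespace Autom

variable {A : Type} {M N P D : Autom A}

section Paths

variable {p q r x y z : M.Q} {a : Ltr A} {u v w : List (Ltr A)}

theorem path_nil : M.Path p [] q ↔ p = q :=
  ⟨fun | .nil _ => rfl, fun h => h ▸ .nil p⟩

theorem path_cons : M.Path p (a :: w) r ↔ ∃ q, (p, a, q) ∈ M.E ∧ M.Path q w r :=
  ⟨fun | .cons h hw => ⟨_, h, hw⟩, fun ⟨_, h, hw⟩ => .cons h hw⟩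

theorem path_singleton : M.Path p [a] q ↔ (p, a, q) ∈ M.E := by
  simp [path_cons, path_nil]

theorem path_append : M.Path p (u ++ v) r ↔ ∃ q, M.Path p u q ∧ M.Path q v r := by
  induction u generalizing p with
  | nil => simp [path_nil]
  | cons a u ih =>
    simp only [List.cons_append, path_cons, ih]
    grind

theorem Path.append (hu : M.Path p u q) (hv : M.Path q v r) : M.Path p (u ++ v) r :=
  path_append.2 ⟨q, hu, hv⟩

theorem Path.inv (hd : M.Dual) (hw : M.Path p w q) : M.Path q (wordInv w) p := by
  induction w generalizing p with
  | nil => exact path_nil.2 (path_nil.1 hw).symm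
  | cons a w ih =>
    obtain ⟨r, hpr, hrq⟩ := path_cons.1 hw
    have : wordInv (a :: w) = wordInv w ++ [a.inv] := by simp [wordInv]
    rw [this]
    exact (ih hrq).append (path_singleton.2 ((hd _ _ _).1 hpr))

theorem Path.map {φ : M.Q → N.Q} (hφ : M.IsHom N φ) (hw : M.Path p w q) :
    N.Path (φ p) w (φ q) := by
  induction w generalizing p with
  | nil => exact path_nil.2 (congrArg φ (path_nil.1 hw))
  | cons a w ih =>
    obtain ⟨r, hpr, hrq⟩ := path_cons.1 hw
    exact path_cons.2 ⟨φ r, hφ.2 _ _ _ hpr, ih hrq⟩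

theorem Path.eq_of_deterministic (hM : M.Deterministic) (hp : M.Path x w p) (hq : M.Path x w q) :
    p = q := by
  induction w generalizing x with
  | nil => exact (path_nil.1 hp).symm.trans (path_nil.1 hq)
  | cons a w ih =>
    obtain ⟨y, hxy, hyp⟩ := path_cons.1 hp
    obtain ⟨z, hxz, hzq⟩ := path_cons.1 hq
    obtain rfl := hM _ _ _ _ hxy hxz
    exact ih hyp hzq

theorem Path.step (hd : M.Dual) (hM : M.Deterministic) (hw : M.Path p u q)
    (hstep : FreeGroup.Red.Step u v) : M.Path p v q := by
  cases hstep with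
  | @not u v a b =>
    obtain ⟨x, hx, hxq⟩ := path_append.1 hw
    obtain ⟨y, hxy, hyq⟩ := path_cons.1 hxq
    obtain ⟨z, hyz, hzq⟩ := path_cons.1 hyq
    obtain rfl : z = x := hM _ _ _ _ hyz ((hd _ _ _).1 hxy)
    exact hx.append hzq

theorem Path.red (hd : M.Dual) (hM : M.Deterministic) (hw : M.Path p u q)
    (hred : FreeGroup.Red u v) : M.Path p v q := by
  induction hred with
  | refl => exact hw
  | tail _ hstep ih => exact ih.step hd hM hstep

theorem Path.of_mk_eq (hd : M.Dual) (hM : M.Deterministic) (hu : M.Path p u q)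
    (hv : FreeGroup.IsReduced v) (huv : FreeGroup.mk u = FreeGroup.mk v) : M.Path p v q := by
  classical
  rw [← hv.reduce_eq, ← FreeGroup.reduce.sound huv]
  exact hu.red hd hM FreeGroup.reduce.red

end Paths

section LangRho

/-- An automaton is connected if every state can be reached from the initial state. -/
def Conn (M : Autom A) : Prop := ∀ q, ∃ w, M.Path M.q0 w q

theorem IsRed.conn (h : M.IsRed) : M.Conn := fun q =>
  let ⟨u, _, _, hu, _⟩ := h q
  ⟨u, hu⟩

/-- The subgroup `L(M)ρ` of the free group defined by a dual automaton `M`. -/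
def langSubgroup (M : Autom A) (hd : M.Dual) : Subgroup (FreeGroup A) where
  carrier := M.langRho
  one_mem' := ⟨[], path_nil.2 rfl, rfl⟩
  mul_mem' := by
    rintro _ _ ⟨u, hu, rfl⟩ ⟨v, hv, rfl⟩
    exact ⟨u ++ v, Path.append hu hv, FreeGroup.mul_mk.symm⟩
  inv_mem' := by
    rintro _ ⟨u, hu, rfl⟩
    exact ⟨wordInv u, Path.inv hd hu, mk_wordInv u⟩

theorem langRho_subset_of_isHom {φ : M.Q → N.Q} (hφ : M.IsHom N φ) : M.langRho ⊆ N.langRho := by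
  rintro _ ⟨w, hw, rfl⟩
  refine ⟨w, ?_, rfl⟩
  have := Path.map hφ hw
  rwa [hφ.1] at this

/-- A labelling of the states by points of a space on which the free group acts such that an edge
`p →a q` carries the label of `q` to the label of `p`. For `X = F(A) ⧸ K`, potentials with the
trivial coset at `q0` are the morphisms from `M` to the Schreier graph of `K`. -/
def IsPotential {X : Type*} [SMul (FreeGroup A) X] (M : Autom A) (τ : M.Q → X) : Prop :=
  ∀ p a q, (p, a, q) ∈ M.E → τ p = FreeGroup.mk [a] • τ q

theorem IsPotential.eq_smul {X : Type*} [MulAction (FreeGroup A) X] {τ : M.Q → X}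
    (hτ : M.IsPotential τ) {p q : M.Q} {w : List (Ltr A)} (hw : M.Path p w q) :
    τ p = FreeGroup.mk w • τ q := by
  induction w generalizing p with
  | nil => rw [path_nil.1 hw, ← FreeGroup.one_eq_mk, one_smul]
  | cons a w ih =>
    obtain ⟨r, hpr, hrq⟩ := path_cons.1 hw
    rw [hτ _ _ _ hpr, ih hrq, smul_smul, FreeGroup.mul_mk, List.singleton_append]

variable {K : Subgroup (FreeGroup A)}

theorem IsPotential.langRho_subset {τ : M.Q → FreeGroup A ⧸ K} (hτ : M.IsPotential τ)
    (hτ₀ : τ M.q0 = (1 : FreeGroup A)) : M.langRho ⊆ K := by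
  rintro _ ⟨w, hw, rfl⟩
  have := hτ.eq_smul hw
  rw [hτ₀, MulAction.Quotient.smul_coe, QuotientGroup.eq] at this
  simpa using this

theorem isPotential_of_mul_mem {t : M.Q → FreeGroup A}
    (ht : ∀ p a q, (p, a, q) ∈ M.E → t p * FreeGroup.mk [a] * (t q)⁻¹ ∈ K) :
    M.IsPotential fun x => (((t x)⁻¹ : FreeGroup A) : FreeGroup A ⧸ K) := by
  intro p a q hpq
  rw [MulAction.Quotient.smul_coe, QuotientGroup.eq, inv_inv, smul_eq_mul, ← mul_assoc]
  exact ht p a q hpq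

theorem mk_mul_mk_mul_inv_mem_langRho (hd : M.Dual) {p q : M.Q} {a : Ltr A} {u v : List (Ltr A)}
    (hu : M.Path M.q0 u p) (hpq : (p, a, q) ∈ M.E) (hv : M.Path M.q0 v q) :
    FreeGroup.mk u * FreeGroup.mk [a] * (FreeGroup.mk v)⁻¹ ∈ M.langRho := by
  refine ⟨u ++ [a] ++ wordInv v, (hu.append (path_singleton.2 hpq)).append (hv.inv hd), ?_⟩
  rw [← mk_wordInv, FreeGroup.mul_mk, FreeGroup.mul_mk]

theorem exists_isPotential (hd : M.Dual) (hc : M.Conn) (hK : M.langRho ⊆ K) :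
    ∃ τ : M.Q → FreeGroup A ⧸ K, M.IsPotential τ ∧ τ M.q0 = (1 : FreeGroup A) := by
  choose t ht using hc
  refine ⟨_, isPotential_of_mul_mem (t := fun x => FreeGroup.mk (t x)) fun p a q hpq =>
    hK (mk_mul_mk_mul_inv_mem_langRho hd (ht p) hpq (ht q)), ?_⟩
  have : FreeGroup.mk (t M.q0) ∈ K := hK ⟨_, ht M.q0, rfl⟩
  simpa [QuotientGroup.eq] using this

/-- Schreier's lemma: the words `t p · a · (t q)⁻¹`, for edges `p →a q` and paths `t` chosen from
`q0` to each state, generate the subgroup defined by the automaton. -/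
theorem fg_of_finite_edges (hd : M.Dual) (hc : M.Conn) (hE : M.E.Finite)
    (hK : M.langRho = ↑K) : K.FG := by
  choose t ht using hc
  let gen : M.Q × Ltr A × M.Q → FreeGroup A := fun e =>
    FreeGroup.mk (t e.1) * FreeGroup.mk [e.2.1] * (FreeGroup.mk (t e.2.2))⁻¹
  let S := insert (FreeGroup.mk (t M.q0)) (gen '' M.E)
  refine (Subgroup.fg_iff K).2 ⟨S, le_antisymm ?_ ?_, (hE.image gen).insert _⟩
  · rw [Subgroup.closure_le, ← hK]
    rintro _ (rfl | ⟨e, he, rfl⟩)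
    · exact ⟨_, ht M.q0, rfl⟩
    · exact mk_mul_mk_mul_inv_mem_langRho hd (ht _) he (ht _)
  · rw [← SetLike.coe_subset_coe, ← hK]
    refine (isPotential_of_mul_mem (t := fun x => FreeGroup.mk (t x)) fun p a q hpq =>
      Subgroup.subset_closure (.inr ⟨_, hpq, rfl⟩)).langRho_subset ?_
    have : FreeGroup.mk (t M.q0) ∈ Subgroup.closure S := Subgroup.subset_closure (.inl rfl)
    simpa [QuotientGroup.eq] using this

end LangRho

end Autom

/-- The equivalence relation generated by `x ∼ y`. -/
def pairSetoid {α : Type*} (x y : α) : Setoid α where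
  r a b := a = b ∨ (a = x ∧ b = y) ∨ (a = y ∧ b = x)
  iseqv := ⟨fun _ => .inl rfl, by grind, by grind⟩

namespace Autom

variable {A : Type} {M N P D : Autom A}

section Hom

variable {φ : M.Q → N.Q} {θ : N.Q → P.Q}

theorem IsHom.comp (hθ : N.IsHom P θ) (hφ : M.IsHom N φ) : M.IsHom P (θ ∘ φ) :=
  ⟨(congrArg θ hφ.1).trans hθ.1, fun _ _ _ h => hθ.2 _ _ _ (hφ.2 _ _ _ h)⟩

theorem IsHom.conn (hφ : M.IsHom N φ) (hsurj : Surjective φ) (hM : M.Conn) : N.Conn := by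
  intro y
  obtain ⟨x, rfl⟩ := hsurj y
  obtain ⟨w, hw⟩ := hM x
  exact ⟨w, hφ.1 ▸ hw.map hφ⟩

theorem IsHom.isRed (hφ : M.IsHom N φ) (hsurj : Surjective φ) (hM : M.IsRed) : N.IsRed := by
  intro y
  obtain ⟨x, rfl⟩ := hsurj y
  obtain ⟨u, v, huv, hu, hv⟩ := hM x
  exact ⟨u, v, huv, hφ.1 ▸ hu.map hφ, hφ.1 ▸ hv.map hφ⟩

theorem IsHom.deterministic (hφ : M.IsHom N φ) (hinj : Injective φ) (hN : N.Deterministic) :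
    M.Deterministic := fun _ _ _ _ h h' => hinj (hN _ _ _ _ (hφ.2 _ _ _ h) (hφ.2 _ _ _ h'))

theorem Isomorphic.trans (h : Isomorphic M N) (h' : Isomorphic N P) : Isomorphic M P :=
  let ⟨φ, hφ, hφ'⟩ := h
  let ⟨θ, hθ, hθ'⟩ := h'
  ⟨φ.trans θ, hθ.comp hφ, hφ'.comp hθ'⟩

theorem Isomorphic.langRho_eq (h : Isomorphic M N) : M.langRho = N.langRho :=
  let ⟨_, hφ, hφ'⟩ := h
  (langRho_subset_of_isHom hφ).antisymm (langRho_subset_of_isHom hφ')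

theorem finite_edges_of_isHom (hφ : M.IsHom N φ) (hfib : ∀ y, (φ ⁻¹' {y}).Finite)
    (hN : N.E.Finite) : M.E.Finite := by
  let f : M.Q × Ltr A × M.Q → N.Q × Ltr A × N.Q := fun e => (φ e.1, e.2.1, φ e.2.2)
  refine (hN.preimage' (f := f) fun ⟨x, a, y⟩ _ => ?_).subset fun e he => hφ.2 _ _ _ he
  refine (((hfib x).prod ((Set.finite_singleton a).prod (hfib y)))).subset ?_
  rintro ⟨x', a', y'⟩ h
  simpa [f] using h

end Hom

section QuotientMaps

/-- `φ` presents `N` as a quotient of the automaton `M`: it is surjective, preserves the initial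
state, and the edges of `N` are the images of those of `M`. -/
structure IsQuotientMap (M N : Autom A) (φ : M.Q → N.Q) : Prop where
  surjective : Surjective φ
  map_q0 : φ M.q0 = N.q0
  mem_edges_iff : ∀ e : N.Q × Ltr A × N.Q,
    e ∈ N.E ↔ ∃ e' ∈ M.E, e = (φ e'.1, e'.2.1, φ e'.2.2)

/-- The quotient of an automaton by an equivalence relation on its states. -/
def quotientAut (M : Autom A) (r : Setoid M.Q) : Autom A where
  Q := Quotient r
  q0 := Quotient.mk r M.q0
  E := {e | ∃ e' ∈ M.E, e = (Quotient.mk r e'.1, e'.2.1, Quotient.mk r e'.2.2)}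

theorem isQuotientMap_mk (M : Autom A) (r : Setoid M.Q) :
    M.IsQuotientMap (M.quotientAut r) (Quotient.mk r) :=
  ⟨Quotient.mk_surjective, rfl, fun _ => Iff.rfl⟩

theorem isQuotientMap_id (M : Autom A) : M.IsQuotientMap M id :=
  ⟨surjective_id, rfl, fun _ => ⟨fun he => ⟨_, he, rfl⟩, fun ⟨_, he, h⟩ => h ▸ he⟩⟩

namespace IsQuotientMap

variable {φ : M.Q → N.Q} {θ : N.Q → P.Q}

theorem isHom (h : M.IsQuotientMap N φ) : M.IsHom N φ :=
  ⟨h.map_q0, fun _ _ _ he => (h.mem_edges_iff _).2 ⟨_, he, rfl⟩⟩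

theorem exists_edge (h : M.IsQuotientMap N φ) {p q : N.Q} {a : Ltr A} (hpq : (p, a, q) ∈ N.E) :
    ∃ x y, φ x = p ∧ φ y = q ∧ (x, a, y) ∈ M.E := by
  obtain ⟨⟨x, a', y⟩, he, heq⟩ := (h.mem_edges_iff _).1 hpq
  obtain ⟨rfl, rfl, rfl⟩ : p = φ x ∧ a = a' ∧ q = φ y := by simpa using heq
  exact ⟨x, y, rfl, rfl, he⟩

theorem comp (hθ : N.IsQuotientMap P θ) (hφ : M.IsQuotientMap N φ) :
    M.IsQuotientMap P (θ ∘ φ) where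
  surjective := hθ.surjective.comp hφ.surjective
  map_q0 := (hθ.isHom.comp hφ.isHom).1
  mem_edges_iff e := by
    constructor
    · intro he
      obtain ⟨p, q, hp, hq, hpq⟩ := hθ.exists_edge he
      obtain ⟨x, y, rfl, rfl, hxy⟩ := hφ.exists_edge hpq
      exact ⟨_, hxy, by simp [hp, hq]⟩
    · rintro ⟨e', he', rfl⟩
      exact (hθ.isHom.comp hφ.isHom).2 _ _ _ he'

theorem dual (h : M.IsQuotientMap N φ) (hd : M.Dual) : N.Dual := by
  have himp : ∀ p a q, (p, a, q) ∈ N.E → (q, a.inv, p) ∈ N.E := by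
    intro p a q hpq
    obtain ⟨x, y, rfl, rfl, hxy⟩ := h.exists_edge hpq
    exact h.isHom.2 _ _ _ ((hd _ _ _).1 hxy)
  exact fun p a q => ⟨himp p a q, fun hqp => by simpa [Ltr.inv_inv] using himp _ _ _ hqp⟩

theorem exists_comp_eq {X : Type*} (h : M.IsQuotientMap N φ) {τ : M.Q → X}
    (hτ : Setoid.ker φ ≤ Setoid.ker τ) : ∃ σ : N.Q → X, σ ∘ φ = τ :=
  ⟨τ ∘ surjInv h.surjective, funext fun _ => hτ (surjInv_eq h.surjective _)⟩

theorem exists_isHom (h : M.IsQuotientMap N φ) {τ : M.Q → P.Q} (hτ : M.IsHom P τ)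
    (hker : Setoid.ker φ ≤ Setoid.ker τ) : ∃ σ : N.Q → P.Q, N.IsHom P σ ∧ σ ∘ φ = τ := by
  obtain ⟨σ, rfl⟩ := h.exists_comp_eq hker
  refine ⟨σ, ⟨h.map_q0 ▸ hτ.1, fun p a q hpq => ?_⟩, rfl⟩
  obtain ⟨x, y, rfl, rfl, hxy⟩ := h.exists_edge hpq
  exact hτ.2 _ _ _ hxy

theorem exists_isPotential {X : Type*} [SMul (FreeGroup A) X] (h : M.IsQuotientMap N φ)
    {τ : M.Q → X} (hτ : M.IsPotential τ) (hker : Setoid.ker φ ≤ Setoid.ker τ) :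
    ∃ σ : N.Q → X, N.IsPotential σ ∧ σ ∘ φ = τ := by
  obtain ⟨σ, rfl⟩ := h.exists_comp_eq hker
  refine ⟨σ, fun p a q hpq => ?_, rfl⟩
  obtain ⟨x, y, rfl, rfl, hxy⟩ := h.exists_edge hpq
  exact hτ _ _ _ hxy

end IsQuotientMap

end QuotientMaps

section Identification

theorem pairSetoid_le_iff {α : Type*} {x y : α} {r : Setoid α} : pairSetoid x y ≤ r ↔ r x y := by
  refine ⟨fun h => h (.inr (.inl ⟨rfl, rfl⟩)), fun h => ?_⟩
  rintro a b (rfl | ⟨rfl, rfl⟩ | ⟨rfl, rfl⟩)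
  exacts [r.refl a, h, r.symm h]

theorem isIdentification_iff {p q : M.Q} :
    M.IsIdentification p q N ↔ ∃ φ, M.IsQuotientMap N φ ∧ Setoid.ker φ = pairSetoid p q :=
  exists_congr fun _ =>
    ⟨fun ⟨hsurj, h0, hker, hE⟩ => ⟨⟨hsurj, h0, hE⟩, Setoid.ext hker⟩,
      fun ⟨⟨hsurj, h0, hE⟩, hker⟩ => ⟨hsurj, h0, Setoid.ext_iff.1 hker, hE⟩⟩

theorem finite_preimage_of_ker_eq {α β : Type*} {f : α → β} {x y : α}
    (hf : Setoid.ker f = pairSetoid x y) (b : β) : (f ⁻¹' {b}).Finite := by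
  by_cases hb : ∃ a, f a = b
  · obtain ⟨a, rfl⟩ := hb
    refine ((Set.toFinite {a, x, y})).subset fun a' (ha' : f a' = f a) => ?_
    rcases (hf ▸ ha' : pairSetoid x y a' a) with h | h | h <;> simp [h]
  · rw [Set.preimage_singleton_eq_empty.2 (by simpa using hb)]
    exact Set.finite_empty

/-- A potential on `M` for `⟨L(M)ρ, (uv)ρ⟩` takes the same value at `p` and `q`, so it descends to
the quotient. -/
theorem IsQuotientMap.langRho_eq_closure {φ : M.Q → N.Q} (hφ : M.IsQuotientMap N φ) (hd : M.Dual)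
    (hc : M.Conn) {p q : M.Q} {u v : List (Ltr A)} (hu : M.Path M.q0 u p) (hv : M.Path q v M.q0)
    (hker : Setoid.ker φ = pairSetoid p q) :
    N.langRho = Subgroup.closure (M.langRho ∪ {FreeGroup.mk (u ++ v)}) := by
  set K := Subgroup.closure (M.langRho ∪ {FreeGroup.mk (u ++ v)})
  refine subset_antisymm ?_ ?_
  · obtain ⟨τ, hτ, hτ₀⟩ := Autom.exists_isPotential hd hc
      (Set.subset_union_left.trans Subgroup.subset_closure : M.langRho ⊆ K)
    have hτpq : τ p = τ q := by
      have huv : FreeGroup.mk u * FreeGroup.mk v ∈ K :=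
        FreeGroup.mul_mk ▸ Subgroup.subset_closure (.inr rfl)
      rw [hτ.eq_smul hv, ← inv_smul_eq_iff.2 (hτ.eq_smul hu), hτ₀, MulAction.Quotient.smul_coe,
        MulAction.Quotient.smul_coe, QuotientGroup.eq]
      simpa using huv
    obtain ⟨σ, hσ, rfl⟩ := hφ.exists_isPotential hτ (hker ▸ pairSetoid_le_iff.2 hτpq)
    exact hσ.langRho_subset (hφ.map_q0 ▸ hτ₀)
  · change (K : Set (FreeGroup A)) ⊆ N.langSubgroup (hφ.dual hd)
    refine SetLike.coe_subset_coe.2 ((Subgroup.closure_le _).2 (Set.union_subset ?_ ?_))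
    · exact langRho_subset_of_isHom hφ.isHom
    · have hpq : φ p = φ q := pairSetoid_le_iff.1 hker.ge
      have hloop := (hpq ▸ hu.map hφ.isHom).append (hv.map hφ.isHom)
      rw [hφ.map_q0] at hloop
      rintro _ rfl
      exact ⟨_, hloop, rfl⟩

end Identification

section Folding

/-- `Folds M N f`: the automaton `N` is obtained from `M` by finitely many elementary reductions of
type 1, and `f` is the resulting quotient map. -/
inductive Folds (M : Autom A) : (N : Autom A) → (M.Q → N.Q) → Prop
  | refl : Folds M M id
  | tail {N P : Autom A} {f : M.Q → N.Q} {φ : N.Q → P.Q} {p q r : N.Q} {a : Ltr A} :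
      Folds M N f → p ≠ q → (r, a, p) ∈ N.E → (r, a, q) ∈ N.E → N.IsQuotientMap P φ →
      Setoid.ker φ = pairSetoid p q → Folds M P (φ ∘ f)

theorem exists_folds_of_reflTransGen_red1 (h : Relation.ReflTransGen Red1 M N) :
    ∃ f, Folds M N f := by
  induction h with
  | refl => exact ⟨id, .refl⟩
  | tail _ hstep ih =>
    obtain ⟨f, hf⟩ := ih
    obtain ⟨p, q, r, a, hpq, hp, hq, hid⟩ := hstep
    obtain ⟨φ, hφ, hker⟩ := isIdentification_iff.1 hid
    exact ⟨_, hf.tail hpq hp hq hφ hker⟩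

namespace Folds

variable {f : M.Q → N.Q}

theorem reflTransGen_red1 (h : Folds M N f) : Relation.ReflTransGen Red1 M N := by
  induction h with
  | refl => exact .refl
  | tail _ hpq hp hq hφ hker ih =>
    exact ih.tail ⟨_, _, _, _, hpq, hp, hq, isIdentification_iff.2 ⟨_, hφ, hker⟩⟩

theorem trans {g : N.Q → P.Q} (hf : Folds M N f) (hg : Folds N P g) : Folds M P (g ∘ f) := by
  induction hg with
  | refl => exact hf
  | tail _ hpq hp hq hφ hker ih => exact ih.tail hpq hp hq hφ hker

theorem isQuotientMap (h : Folds M N f) : M.IsQuotientMap N f := by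
  induction h with
  | refl => exact isQuotientMap_id M
  | tail _ _ _ _ hφ _ ih => exact hφ.comp ih

theorem finite_preimage (h : Folds M N f) (y : N.Q) : (f ⁻¹' {y}).Finite := by
  induction h with
  | refl => exact Set.finite_singleton y
  | tail _ _ _ _ _ hker ih =>
    exact (finite_preimage_of_ker_eq hker y).preimage' fun b _ => ih b

theorem langRho_eq (h : Folds M N f) (hd : M.Dual) (hc : M.Conn) : N.langRho = M.langRho := by
  induction h with
  | refl => rfl
  | @tail N P f φ p q r a hf _ hp hq hφ hker ih =>
    have hdN := hf.isQuotientMap.dual hd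
    have hcN := hf.isQuotientMap.isHom.conn hf.isQuotientMap.surjective hc
    obtain ⟨w, hw⟩ := hcN r
    have hv := (hw.append (path_singleton.2 hq)).inv hdN
    rw [hφ.langRho_eq_closure hdN hcN (hw.append (path_singleton.2 hp)) hv hker, ← FreeGroup.mul_mk,
      mk_wordInv, ← FreeGroup.mul_mk, mul_inv_cancel, ← ih]
    change (Subgroup.closure (N.langSubgroup hdN ∪ {1} : Set (FreeGroup A)) : Set (FreeGroup A)) =
      N.langSubgroup hdN
    rw [Subgroup.closure_union, Subgroup.closure_eq, Subgroup.closure_singleton_one, sup_bot_eq]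

theorem exists_isHom (h : Folds M N f) {π : M.Q → D.Q} (hπ : M.IsHom D π)
    (hD : D.Deterministic) : ∃ σ : N.Q → D.Q, N.IsHom D σ ∧ σ ∘ f = π := by
  induction h with
  | refl => exact ⟨π, hπ, rfl⟩
  | tail _ _ hp hq hφ hker ih =>
    obtain ⟨σ, hσ, rfl⟩ := ih
    have hpq := hD _ _ _ _ (hσ.2 _ _ _ hp) (hσ.2 _ _ _ hq)
    obtain ⟨σ', hσ', rfl⟩ := hφ.exists_isHom hσ (hker ▸ pairSetoid_le_iff.2 hpq)
    exact ⟨σ', hσ', rfl⟩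

theorem exists_of_edges {p q r : M.Q} {a : Ltr A} (hp : (r, a, p) ∈ M.E) (hq : (r, a, q) ∈ M.E) :
    ∃ (N : Autom A) (f : M.Q → N.Q), Folds M N f ∧ Setoid.ker f = pairSetoid p q := by
  by_cases hpq : p = q
  · refine ⟨M, id, .refl, le_antisymm ?_ (pairSetoid_le_iff.2 hpq)⟩
    exact fun _ _ h => .inl h
  · exact ⟨_, _, Folds.refl.tail hpq hp hq (isQuotientMap_mk M _) (Setoid.ker_mk_eq _),
      Setoid.ker_mk_eq _⟩

/-- A folding sequence of `M` can be replayed in the target `P` of any morphism from `M`. -/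
theorem exists_pushout (h : Folds M N f) {θ : M.Q → P.Q} (hθ : M.IsHom P θ) :
    ∃ (Z : Autom A) (g : P.Q → Z.Q) (θ' : N.Q → Z.Q),
      Folds P Z g ∧ N.IsHom Z θ' ∧ θ' ∘ f = g ∘ θ := by
  induction h with
  | refl => exact ⟨P, id, θ, .refl, hθ, rfl⟩
  | tail _ _ hp hq hφ hker ih =>
    obtain ⟨Z, g, θ', hg, hθ', hcomm⟩ := ih
    obtain ⟨Z', g', hg', hker'⟩ := exists_of_edges (hθ'.2 _ _ _ hp) (hθ'.2 _ _ _ hq)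
    have hpq : (g' ∘ θ') _ = (g' ∘ θ') _ := pairSetoid_le_iff.1 hker'.ge
    obtain ⟨θ'', hθ'', hcomm'⟩ := hφ.exists_isHom (hg'.isQuotientMap.isHom.comp hθ')
      (hker ▸ pairSetoid_le_iff.2 hpq)
    refine ⟨Z', g' ∘ g, θ'', hg.trans hg', hθ'', ?_⟩
    rw [← comp_assoc, hcomm', comp_assoc, hcomm, comp_assoc]

theorem exists_of_paths {x y y' : M.Q} {w : List (Ltr A)} (hy : M.Path x w y)
    (hy' : M.Path x w y') : ∃ (N : Autom A) (f : M.Q → N.Q), Folds M N f ∧ f y = f y' := by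
  induction w generalizing M with
  | nil => exact ⟨M, id, .refl, (path_nil.1 hy).symm.trans (path_nil.1 hy')⟩
  | cons a w ih =>
    obtain ⟨z, hxz, hzy⟩ := path_cons.1 hy
    obtain ⟨z', hxz', hzy'⟩ := path_cons.1 hy'
    obtain ⟨N, f, hf, hker⟩ := exists_of_edges hxz hxz'
    have hzz' : f z = f z' := pairSetoid_le_iff.1 hker.ge
    have hpath := hzz' ▸ hzy.map hf.isQuotientMap.isHom
    obtain ⟨P, g, hg, heq⟩ := ih hpath (hzy'.map hf.isQuotientMap.isHom)
    exact ⟨P, g ∘ f, hf.trans hg, heq⟩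

theorem exists_of_finite {S : Set (M.Q × M.Q)} (hS : S.Finite)
    (hpath : ∀ e ∈ S, ∃ x w, M.Path x w e.1 ∧ M.Path x w e.2) :
    ∃ (N : Autom A) (f : M.Q → N.Q), Folds M N f ∧ ∀ e ∈ S, f e.1 = f e.2 := by
  induction S, hS using Set.Finite.induction_on with
  | empty => exact ⟨M, id, .refl, by simp⟩
  | @insert e S _ _ ih =>
    obtain ⟨N, f, hf, hfS⟩ := ih fun e he => hpath e (.inr he)
    obtain ⟨x, w, h₁, h₂⟩ := hpath e (.inl rfl)
    obtain ⟨P, g, hg, heq⟩ :=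
      exists_of_paths (h₁.map hf.isQuotientMap.isHom) (h₂.map hf.isQuotientMap.isHom)
    refine ⟨P, g ∘ f, hf.trans hg, ?_⟩
    rintro e' (rfl | he')
    exacts [heq, congrArg g (hfS e' he')]

end Folds

end Folding

section Reduced

variable {p q : M.Q} {a : Ltr A}

theorem exists_isReduced_append_singleton (hd : M.Dual) (hred : M.IsRed) (p : M.Q) (a : Ltr A) :
    ∃ w, M.Path M.q0 w p ∧ FreeGroup.IsReduced (w ++ [a]) := by
  obtain ⟨u, v, huv, hu, hv⟩ := hred p
  have huv := huv.isReduced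
  by_cases hua : FreeGroup.IsReduced (u ++ [a])
  · exact ⟨u, hu, hua⟩
  refine ⟨wordInv v, hv.inv hd, ?_⟩
  cases v with
  | nil => exact FreeGroup.IsReduced.singleton
  | cons b v =>
    have hvinv := isReduced_wordInv (w := b :: v) (huv.infix ⟨u, [], by simp⟩)
    simp only [FreeGroup.IsReduced, List.isChain_append] at hua huv hvinv ⊢
    obtain ⟨x, hx, hxa⟩ : ∃ x ∈ u.getLast?, ¬(x.1 = a.1 → x.2 = a.2) := by
      by_contra! h
      exact hua ⟨huv.1, .singleton a, by simpa using h⟩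
    have hxb := huv.2.2 x hx b rfl
    have hba : b.inv.1 = a.1 → b.inv.2 = a.2 := by
      simp only [Ltr.inv]
      grind
    exact ⟨hvinv, .singleton a, by simpa [wordInv] using hba⟩

theorem exists_isReduced_append_append (hd : M.Dual) (hred : M.IsRed) (p : M.Q) (a : Ltr A)
    (q : M.Q) : ∃ u v, M.Path M.q0 u p ∧ M.Path q v M.q0 ∧ FreeGroup.IsReduced (u ++ [a] ++ v) := by
  obtain ⟨u, hu, hua⟩ := exists_isReduced_append_singleton hd hred p a
  obtain ⟨v, hv, hva⟩ := exists_isReduced_append_singleton hd hred q a.inv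
  have hav : FreeGroup.IsReduced ([a] ++ wordInv v) := by
    simpa [wordInv, Ltr.inv] using isReduced_wordInv hva
  exact ⟨u, wordInv v, hu, hv.inv hd, hua.append_overlap hav (by simp)⟩

theorem Path.eq_of_forall_loop {w : List (Ltr A)} (hw : M.Path p w q)
    (hp : ∀ a y, (p, a, y) ∈ M.E → y = p) : p = q := by
  induction w with
  | nil => exact path_nil.1 hw
  | cons a w ih =>
    obtain ⟨y, hpy, hyq⟩ := path_cons.1 hw
    exact ih (hp a y hpy ▸ hyq)

/-- A word read through a vertex of degree one backtracks there. -/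
theorem not_red2_of_isRed (hred : M.IsRed) : ¬ Red2 M N := by
  rintro ⟨p, q, a, hq₀, -, -, hdeg, -⟩
  obtain ⟨u, v, huv, hu, hv⟩ := hred q
  by_cases hpq : p = q
  · refine hq₀ (hv.eq_of_forall_loop fun b y hy => ?_)
    rcases hdeg _ hy (.inl rfl) with h | h <;> grind
  · obtain rfl | ⟨u, b, rfl⟩ := u.eq_nil_or_concat'
    · exact hq₀ (path_nil.1 hu).symm
    rcases v with _ | ⟨c, v⟩
    · exact hq₀ (path_nil.1 hv)
    obtain ⟨x, -, hx⟩ := path_append.1 hu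
    obtain ⟨y, hy, -⟩ := path_cons.1 hv
    have hb : b = a := by rcases hdeg _ (path_singleton.1 hx) (.inr rfl) with h | h <;> grind
    have hc : c = a.inv := by rcases hdeg _ hy (.inl rfl) with h | h <;> grind
    exact huv u v a.1 a.2 (by simp [hb, hc, Ltr.inv])

end Reduced

section Finiteness

/-- The automaton with the states of `M` and the set of transitions `T`. -/
def withEdges (M : Autom A) (T : Set (M.Q × Ltr A × M.Q)) : Autom A := ⟨M.Q, M.q0, T⟩

theorem isHom_withEdges {T T' : Set (M.Q × Ltr A × M.Q)} (h : T ⊆ T') :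
    (M.withEdges T).IsHom (M.withEdges T') id :=
  ⟨rfl, fun _ _ _ he => h he⟩

theorem exists_finite_mem_langRho_withEdges {g : FreeGroup A} (hg : g ∈ M.langRho) :
    ∃ T ⊆ M.E, T.Finite ∧ g ∈ (M.withEdges T).langRho := by
  have hpath : ∀ {p q : M.Q} {w : List (Ltr A)}, M.Path p w q →
      ∃ T ⊆ M.E, T.Finite ∧ (M.withEdges T).Path p w q := by
    intro p q w hw
    induction w generalizing p with
    | nil => exact ⟨∅, Set.empty_subset _, Set.finite_empty, path_nil.2 (path_nil.1 hw)⟩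
    | cons a w ih =>
      obtain ⟨r, hpr, hrq⟩ := path_cons.1 hw
      obtain ⟨T, hTE, hT, hrq⟩ := ih hrq
      have hid : (M.withEdges T).IsHom (M.withEdges (insert (p, a, r) T)) id :=
        isHom_withEdges (Set.subset_insert _ T)
      exact ⟨insert (p, a, r) T, Set.insert_subset hpr hTE, hT.insert _,
        path_cons.2 ⟨r, .inl rfl, hrq.map hid⟩⟩
  obtain ⟨w, hw, rfl⟩ := hg
  obtain ⟨T, hTE, hT, hw⟩ := hpath hw
  exact ⟨T, hTE, hT, w, hw, rfl⟩

theorem exists_finite_dual_withEdges (hd : M.Dual) {S : Set (FreeGroup A)} (hS : S.Finite)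
    (hSM : S ⊆ M.langRho) :
    ∃ T ⊆ M.E, T.Finite ∧ (M.withEdges T).Dual ∧ S ⊆ (M.withEdges T).langRho := by
  choose! T hTE hT hST using fun g (hg : g ∈ S) => exists_finite_mem_langRho_withEdges (hSM hg)
  let U := ⋃ g ∈ S, T g
  let rev : M.Q × Ltr A × M.Q → M.Q × Ltr A × M.Q := fun e => (e.2.2, e.2.1.inv, e.1)
  have hrev : Involutive rev := fun e => by simp [rev, Ltr.inv_inv]
  have hU : U.Finite := hS.biUnion fun g hg => hT g hg
  have hUE : U ⊆ M.E := Set.iUnion₂_subset hTE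
  refine ⟨U ∪ rev ⁻¹' U, Set.union_subset hUE fun e he => (hd _ _ _).2 (hUE he),
    hU.union (hU.preimage hrev.injective.injOn), fun p a q => ?_, fun g hg => ?_⟩
  · exact or_comm.trans (or_congr_right (by simp [rev, Ltr.inv_inv, withEdges]))
  · have hgU : T g ⊆ U := Set.subset_biUnion_of_mem (u := T) hg
    have hid : (M.withEdges (T g)).IsHom (M.withEdges (U ∪ rev ⁻¹' U)) id :=
      isHom_withEdges (hgU.trans Set.subset_union_left)
    exact langRho_subset_of_isHom hid (hST g hg)

/-- Every edge lies on a reduced loop at `q0`, and by determinism that loop is already carried by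
the edges of any sub-automaton which defines the same subgroup. -/
theorem edges_subset_of_langRho_subset (hM : M.Deterministic) (hd : M.Dual) (hred : M.IsRed)
    {T : Set (M.Q × Ltr A × M.Q)} (hTE : T ⊆ M.E) (hdT : (M.withEdges T).Dual)
    (hT : M.langRho ⊆ (M.withEdges T).langRho) : M.E ⊆ T := by
  rintro ⟨p, a, q⟩ hpq
  have hid : (M.withEdges T).IsHom M id := isHom_withEdges hTE
  obtain ⟨u, v, hu, hv, huv⟩ := exists_isReduced_append_append hd hred p a q
  have hua := hu.append (path_singleton.2 hpq)
  obtain ⟨w, hw, hwuv⟩ := hT ⟨_, hua.append hv, rfl⟩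
  have hloop := hw.of_mk_eq hdT (hid.deterministic injective_id hM) huv hwuv
  obtain ⟨q', hua', -⟩ := path_append.1 hloop
  obtain ⟨p', hu', hpq'⟩ := path_append.1 hua'
  obtain rfl : p' = p := Path.eq_of_deterministic (M := M) hM (hu'.map hid) hu
  obtain rfl : q' = q := Path.eq_of_deterministic (M := M) hM (hua'.map hid) hua
  exact path_singleton.1 hpq'

theorem finite_edges_of_fg (hM : M.Deterministic) (hd : M.Dual) (hred : M.IsRed)
    {K : Subgroup (FreeGroup A)} (hK : M.langRho = ↑K) (hfg : K.FG) : M.E.Finite := by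
  obtain ⟨S, rfl, hS⟩ := (Subgroup.fg_iff K).1 hfg
  obtain ⟨T, hTE, hT, hdT, hST⟩ :=
    exists_finite_dual_withEdges hd hS (hK ▸ Subgroup.subset_closure)
  refine hT.subset (edges_subset_of_langRho_subset hM hd hred hTE hdT ?_)
  rw [hK]
  exact (Subgroup.closure_le ((M.withEdges T).langSubgroup hdT)).2 hST

end Finiteness

section Expansion

/-- The `i`-th state on the new path of the expansion of `M` by `(p, w, q)`. -/
def expansionNode (M : Autom A) (p : M.Q) (w : List (Ltr A)) (q : M.Q) (i : ℕ) :
    M.Q ⊕ {i : Fin w.length // 0 < (i : ℕ)} :=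
  if h : 0 < i ∧ i < w.length then .inr ⟨⟨i, h.2⟩, h.1⟩ else .inl (if i = 0 then p else q)

/-- The expansion of `M` by `(p, w, q)`, with its new states indexed by the positive integers below
the length of `w`. -/
def expansion (M : Autom A) (p : M.Q) (w : List (Ltr A)) (q : M.Q) : Autom A where
  Q := M.Q ⊕ {i : Fin w.length // 0 < (i : ℕ)}
  q0 := .inl M.q0
  E := {e | (∃ e' ∈ M.E, e = (.inl e'.1, e'.2.1, .inl e'.2.2)) ∨ ∃ i : Fin w.length,
    e = (M.expansionNode p w q i, w.get i, M.expansionNode p w q (i + 1)) ∨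
    e = (M.expansionNode p w q (i + 1), (w.get i).inv, M.expansionNode p w q i)}

variable {p q : M.Q} {w : List (Ltr A)}

theorem expansionNode_zero : M.expansionNode p w q 0 = .inl p := by simp [expansionNode]

theorem expansionNode_length (hw : w ≠ []) : M.expansionNode p w q w.length = .inl q := by
  simp [expansionNode, hw]

theorem expansionNode_val (i : {i : Fin w.length // 0 < (i : ℕ)}) :
    M.expansionNode p w q i = .inr i := by
  simp [expansionNode, i.2]

theorem isExpansion_expansion (hw : w ≠ []) : M.IsExpansion p w q (M.expansion p w q) := by
  refine ⟨hw, .inl, fun i => M.expansionNode p w q i, Sum.inl_injective, rfl, expansionNode_zero,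
    expansionNode_length hw, ?_, ?_, ?_, fun e => Iff.rfl⟩
  · rintro i h0 hi ⟨y, hy⟩
    simp [expansionNode, h0, hi] at hy
  · intro i j h0 hi hij
    simp only [expansionNode, h0, hi, and_self, dite_true] at hij
    split_ifs at hij with hj
    exact Fin.ext (congrArg (fun k => (k.1 : ℕ)) (Sum.inr_injective hij))
  · rintro (x | i)
    · exact .inl ⟨x, rfl⟩
    · exact .inr ⟨i.1.castSucc, expansionNode_val i⟩

theorem isHom_inl_expansion : M.IsHom (M.expansion p w q) .inl :=
  ⟨rfl, fun _ _ _ he => .inl ⟨_, he, rfl⟩⟩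

theorem dual_expansion (hd : M.Dual) : (M.expansion p w q).Dual := by
  have himp : ∀ x a y, (x, a, y) ∈ (M.expansion p w q).E →
      (y, a.inv, x) ∈ (M.expansion p w q).E := by
    rintro x a y (⟨⟨x', a', y'⟩, he, heq⟩ | ⟨i, heq | heq⟩) <;> cases heq
    · exact .inl ⟨_, (hd _ _ _).1 he, rfl⟩
    · exact .inr ⟨i, .inr rfl⟩
    · exact .inr ⟨i, .inl (by rw [Ltr.inv_inv]; rfl)⟩
  exact fun x a y => ⟨himp x a y, fun h => by simpa [Ltr.inv_inv] using himp _ _ _ h⟩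

theorem path_take_of_forall_mem {d : ℕ → N.Q}
    (hd : ∀ i (hi : i < w.length), (d i, w[i], d (i + 1)) ∈ N.E) {i : ℕ} (hi : i ≤ w.length) :
    N.Path (d 0) (w.take i) (d i) := by
  induction i with
  | zero => exact path_nil.2 rfl
  | succ i ih =>
    rw [List.take_succ_eq_append_getElem hi]
    exact (ih (by lia)).append (path_singleton.2 (hd i hi))

theorem path_drop_of_forall_mem {d : ℕ → N.Q}
    (hd : ∀ i (hi : i < w.length), (d i, w[i], d (i + 1)) ∈ N.E) {i : ℕ} (hi : i ≤ w.length) :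
    N.Path (d i) (w.drop i) (d w.length) := by
  induction hi using Nat.decreasingInduction with
  | self => rw [List.drop_length, path_nil]
  | of_succ i hi ih =>
    rw [List.drop_eq_getElem_cons hi]
    exact path_cons.2 ⟨_, hd i hi, ih⟩

theorem Path.exists_forall_mem {x y : N.Q} (hw : N.Path x w y) :
    ∃ d : ℕ → N.Q, d 0 = x ∧ d w.length = y ∧
      ∀ i (hi : i < w.length), (d i, w[i], d (i + 1)) ∈ N.E := by
  induction w generalizing x with
  | nil => exact ⟨fun _ => x, rfl, path_nil.1 hw, by simp⟩
  | cons a w ih =>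
    obtain ⟨z, hxz, hzy⟩ := path_cons.1 hw
    obtain ⟨d, rfl, hdy, hd⟩ := ih hzy
    refine ⟨fun i => i.casesOn x d, rfl, hdy, fun i hi => ?_⟩
    cases i with
    | zero => exact hxz
    | succ i => exact hd i (Nat.lt_of_succ_lt_succ hi)

theorem expansionNode_mem_edges (i : ℕ) (hi : i < w.length) :
    ((M.expansionNode p w q i, w[i], M.expansionNode p w q (i + 1)) :
      (M.expansion p w q).Q × Ltr A × (M.expansion p w q).Q) ∈ (M.expansion p w q).E :=
  .inr ⟨⟨i, hi⟩, .inl rfl⟩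

theorem path_expansion (hw : w ≠ []) : (M.expansion p w q).Path (.inl p) w (.inl q) := by
  have := path_drop_of_forall_mem (expansionNode_mem_edges (p := p) (q := q)) w.length.zero_le
  rwa [expansionNode_zero, expansionNode_length hw] at this

theorem exists_path_expansion_inr (i : {i : Fin w.length // 0 < (i : ℕ)}) :
    ∃ w₁ w₂, w = w₁ ++ w₂ ∧ (M.expansion p w q).Path (.inl p) w₁ (.inr i) ∧
      (M.expansion p w q).Path (.inr i) w₂ (.inl q) := by
  have hw : w ≠ [] := List.ne_nil_of_length_pos (i.2.trans i.1.2)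
  have htake := path_take_of_forall_mem (expansionNode_mem_edges (p := p) (q := q)) i.1.2.le
  have hdrop := path_drop_of_forall_mem (expansionNode_mem_edges (p := p) (q := q)) i.1.2.le
  rw [expansionNode_zero, expansionNode_val] at htake
  rw [expansionNode_length hw, expansionNode_val] at hdrop
  exact ⟨w.take i, w.drop i, (List.take_append_drop _ w).symm, htake, hdrop⟩

theorem exists_isHom_expansion {f : M.Q → D.Q} (hf : M.IsHom D f) (hd : D.Dual)
    (hw : D.Path (f p) w (f q)) : ∃ π, (M.expansion p w q).IsHom D π ∧ π ∘ .inl = f := by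
  obtain ⟨d, hdp, hdq, hdE⟩ := hw.exists_forall_mem
  let π : (M.expansion p w q).Q → D.Q := Sum.elim f fun i => d i
  have hπ : ∀ i ≤ w.length, π (M.expansionNode p w q i) = d i := by
    intro i hi
    by_cases h : 0 < i ∧ i < w.length
    · simp [π, expansionNode, h]
    · have : i = 0 ∨ i = w.length := by lia
      simp only [π, expansionNode, h, dite_false, Sum.elim_inl]
      grind
  refine ⟨π, ⟨hf.1, ?_⟩, rfl⟩
  rintro x a y (⟨⟨x', a', y'⟩, he, heq⟩ | ⟨i, heq | heq⟩) <;> cases heq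
  · exact hf.2 _ _ _ he
  · rw [hπ _ i.2.le, hπ _ i.2]
    exact hdE i i.2
  · rw [hπ _ i.2.le, hπ _ i.2]
    exact (hd _ _ _).1 (hdE i i.2)

end Expansion

section IdentificationViaExpansion

variable {p q : M.Q} {u v : List (Ltr A)}

theorem exists_path_expansion_inl (hd : M.Dual) (hu : M.Path M.q0 u p) (hv : M.Path q v M.q0)
    (i : {i : Fin (u ++ v).length // 0 < (i : ℕ)}) :
    ∃ m t, (M.expansion M.q0 (u ++ v) M.q0).Path (.inl M.q0) t (.inr i) ∧
      (M.expansion M.q0 (u ++ v) M.q0).Path (.inl M.q0) t (.inl m) := by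
  have hinl : M.IsHom (M.expansion M.q0 (u ++ v) M.q0) .inl := isHom_inl_expansion
  obtain ⟨w₁, w₂, hw, h₁, h₂⟩ := exists_path_expansion_inr (M := M) (p := M.q0) (q := M.q0) i
  rcases List.append_eq_append_iff.1 hw with ⟨t, -, ht⟩ | ⟨t, ht, -⟩
  · rw [ht] at hv
    obtain ⟨m, -, hm⟩ := path_append.1 hv
    exact ⟨m, wordInv w₂, h₂.inv (dual_expansion hd), (hm.inv hd).map hinl⟩
  · rw [ht] at hu
    obtain ⟨m, hm, -⟩ := path_append.1 hu
    exact ⟨m, w₁, h₁, hm.map hinl⟩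

/-- The new loop `uv` folds onto the paths `q0 →u p` and `q →v q0` of `M`; the state in which its
two halves meet is folded onto both `p` and `q`. -/
theorem exists_folds_expansion (hd : M.Dual) (hu : M.Path M.q0 u p) (hv : M.Path q v M.q0)
    (huv : u ++ v ≠ []) :
    ∃ (Y : Autom A) (h : (M.expansion M.q0 (u ++ v) M.q0).Q → Y.Q),
      Folds (M.expansion M.q0 (u ++ v) M.q0) Y h ∧ (∀ x, ∃ m, h x = h (.inl m)) ∧
        h (.inl p) = h (.inl q) := by
  set X := M.expansion M.q0 (u ++ v) M.q0
  have hinl : M.IsHom X .inl := isHom_inl_expansion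
  have hdX : X.Dual := dual_expansion hd
  choose m t ht hm using exists_path_expansion_inl hd hu hv
  obtain ⟨z, hz, hz'⟩ := path_append.1 (path_expansion (M := M) (p := M.q0) (q := M.q0) huv)
  let S : Set (X.Q × X.Q) := Set.range (fun i => (.inr i, .inl (m i))) ∪ {(z, .inl p), (z, .inl q)}
  have hS : ∀ e ∈ S, ∃ x w, X.Path x w e.1 ∧ X.Path x w e.2 := by
    rintro _ (⟨i, rfl⟩ | rfl | rfl)
    · exact ⟨_, _, ht i, hm i⟩
    · exact ⟨_, _, hz, hu.map hinl⟩
    · exact ⟨_, _, Path.inv hdX hz', (hv.map hinl).inv hdX⟩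
  obtain ⟨Y, h, hh, hhS⟩ := Folds.exists_of_finite (M := X)
    ((Set.finite_range _).union (Set.toFinite _)) hS
  refine ⟨Y, h, hh, ?_, ?_⟩
  · rintro (x | i)
    · exact ⟨x, rfl⟩
    · exact ⟨m i, hhS _ (.inl ⟨i, rfl⟩)⟩
  · exact (hhS _ (.inr (.inl rfl))).symm.trans (hhS _ (.inr (.inr rfl)))

theorem exists_folds_expansion_isomorphic {φ : M.Q → N.Q} {f : N.Q → D.Q} (hd : M.Dual)
    (hu : M.Path M.q0 u p) (hv : M.Path q v M.q0) (huv : u ++ v ≠ [])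
    (hφ : M.IsQuotientMap N φ) (hker : Setoid.ker φ = pairSetoid p q) (hf : Folds N D f)
    (hD : D.Deterministic) :
    ∃ (Z : Autom A) (g : (M.expansion M.q0 (u ++ v) M.q0).Q → Z.Q),
      Folds (M.expansion M.q0 (u ++ v) M.q0) Z g ∧ Isomorphic Z D := by
  obtain ⟨Y, h, hh, hsurj, hpq⟩ := exists_folds_expansion hd hu hv huv
  obtain ⟨θ, hθ, hθφ⟩ := hφ.exists_isHom (hh.isQuotientMap.isHom.comp isHom_inl_expansion)
    (hker ▸ pairSetoid_le_iff.2 hpq)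
  obtain ⟨Z, g, θ', hg, hθ', hcomm⟩ := hf.exists_pushout hθ
  have hfφ : M.IsQuotientMap D (f ∘ φ) := hf.isQuotientMap.comp hφ
  have hloop : D.Path (f (φ M.q0)) (u ++ v) (f (φ M.q0)) := by
    have hfpq : (f ∘ φ) p = (f ∘ φ) q := congrArg f (pairSetoid_le_iff.1 hker.ge)
    exact (hfpq ▸ hu.map hfφ.isHom).append (hv.map hfφ.isHom)
  obtain ⟨π, hπ, hπf⟩ := exists_isHom_expansion hfφ.isHom (hfφ.dual hd) hloop
  have hZ := hh.trans hg
  obtain ⟨π', hπ', hπ'π⟩ := hZ.exists_isHom hπ hD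
  have hθ'm (m : M.Q) : θ' (f (φ m)) = g (h (.inl m)) :=
    (congrFun hcomm (φ m)).trans (congrArg g (congrFun hθφ m))
  have hπ'm (m : M.Q) : π' (g (h (.inl m))) = f (φ m) :=
    (congrFun hπ'π (.inl m)).trans (congrFun hπf m)
  have hleft : LeftInverse θ' π' := by
    intro z
    obtain ⟨x, rfl⟩ := hZ.isQuotientMap.surjective z
    obtain ⟨m, hm⟩ := hsurj x
    rw [comp_apply, hm, hπ'm, hθ'm]
  have hright : RightInverse θ' π' := by
    intro d
    obtain ⟨m, rfl⟩ := hfφ.surjective d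
    rw [comp_apply, hθ'm, hπ'm]
  exact ⟨Z, g ∘ h, hZ, ⟨π', θ', hleft, hright⟩, hπ', hθ'⟩

end IdentificationViaExpansion

section IStep

theorem ReductionOf.exists_folds (h : ReductionOf M N) (hred : M.IsRed) :
    ∃ f, Folds M N f ∧ N.Deterministic := by
  obtain ⟨M₁, hfold, hdet, htrim, -⟩ := h
  obtain ⟨f, hf⟩ := exists_folds_of_reflTransGen_red1 hfold
  rcases htrim.cases_head with rfl | ⟨_, hstep, -⟩
  · exact ⟨f, hf, hdet⟩
  · have hred₁ := hf.isQuotientMap.isHom.isRed hf.isQuotientMap.surjective hred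
    exact absurd hstep (not_red2_of_isRed hred₁)

theorem Folds.reductionOf {f : M.Q → N.Q} (h : Folds M N f) (hdet : N.Deterministic)
    (hred : N.IsRed) : ReductionOf M N :=
  ⟨N, h.reflTransGen_red1, hdet, .refl, fun _ => not_red2_of_isRed hred⟩

variable {p q : M.Q} {u v : List (Ltr A)}

theorem IStep.exists_folds (h : M.IStep p q N) (hred : M.IsRed) :
    ∃ (P D : Autom A) (φ : M.Q → P.Q) (f : P.Q → D.Q), M.IsQuotientMap P φ ∧
      Setoid.ker φ = pairSetoid p q ∧ Folds P D f ∧ D.Deterministic ∧ Isomorphic D N := by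
  obtain ⟨-, P, D, hid, hD, hiso⟩ := h
  obtain ⟨φ, hφ, hker⟩ := isIdentification_iff.1 hid
  obtain ⟨f, hf, hdet⟩ := hD.exists_folds (hφ.isHom.isRed hφ.surjective hred)
  exact ⟨P, D, φ, f, hφ, hker, hf, hdet, hiso⟩

theorem IStep.eStep (h : M.IStep p q N) (hd : M.Dual) (hred : M.IsRed)
    (hu : M.Path M.q0 u p) (hv : M.Path q v M.q0) : M.EStep (u ++ v) N := by
  have huv : u ++ v ≠ [] := by
    intro huv
    obtain ⟨rfl, rfl⟩ := List.append_eq_nil_iff.1 huv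
    exact h.1 ((path_nil.1 hu).symm.trans (path_nil.1 hv).symm)
  obtain ⟨P, D, φ, f, hφ, hker, hf, hdet, hiso⟩ := h.exists_folds hred
  have hfφ := hf.isQuotientMap.comp hφ
  obtain ⟨Z, g, hg, hZD⟩ := exists_folds_expansion_isomorphic hd hu hv huv hφ hker hf hdet
  obtain ⟨σ, hσ, hσ'⟩ := hZD
  have hredZ := hσ'.isRed σ.symm.surjective (hfφ.isHom.isRed hfφ.surjective hred)
  exact ⟨_, Z, isExpansion_expansion huv,
    hg.reductionOf (hσ.deterministic σ.injective hdet) hredZ, .trans ⟨σ, hσ, hσ'⟩ hiso⟩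

theorem IStep.langRho_eq_closure (h : M.IStep p q N) (hd : M.Dual) (hred : M.IsRed)
    (hu : M.Path M.q0 u p) (hv : M.Path q v M.q0) :
    N.langRho = Subgroup.closure (M.langRho ∪ {FreeGroup.mk (u ++ v)}) := by
  obtain ⟨P, D, φ, f, hφ, hker, hf, -, hiso⟩ := h.exists_folds hred
  rw [← hiso.langRho_eq, hf.langRho_eq (hφ.dual hd) (hφ.isHom.conn hφ.surjective hred.conn),
    hφ.langRho_eq_closure hd hred.conn hu hv hker]

theorem IStep.fg (h : M.IStep p q N) (hd : M.Dual) (hred : M.IsRed)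
    {H K : Subgroup (FreeGroup A)} (hH : M.langRho = ↑H) (hK : N.langRho = ↑K) (hfg : K.FG) :
    H.FG := by
  obtain ⟨P, D, φ, f, hφ, hker, hf, hdet, hiso⟩ := h.exists_folds hred
  have hfφ := hf.isQuotientMap.comp hφ
  have hD : D.E.Finite := finite_edges_of_fg hdet (hfφ.dual hd)
    (hfφ.isHom.isRed hfφ.surjective hred) (hiso.langRho_eq.trans hK) hfg
  have hP : P.E.Finite := finite_edges_of_isHom hf.isQuotientMap.isHom hf.finite_preimage hD
  have hM : M.E.Finite := finite_edges_of_isHom hφ.isHom (finite_preimage_of_ker_eq hker) hP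
  exact fg_of_finite_edges hd hred.conn hM hH

end IStep

end Autom

theorem istep_langRho_and_rank_general {A : Type} (M : Autom A) (hd : M.Dual) (hred : M.IsRed)
    (H : Subgroup (FreeGroup A)) (hH : M.langRho = ↑H) (u v : List (Ltr A)) (p q : M.Q)
    (hu : M.Path M.q0 u p) (hv : M.Path q v M.q0) (N : Autom A) (hstep : M.IStep p q N) :
    M.EStep (u ++ v) N ∧
      N.langRho = Subgroup.closure (↑H ∪ {FreeGroup.mk (u ++ v)}) ∧
      rk (Subgroup.closure (↑H ∪ {FreeGroup.mk (u ++ v)})) ≤ 1 + rk H ∧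
      (rk (Subgroup.closure (↑H ∪ {FreeGroup.mk (u ++ v)})) = 1 + rk H →
        FreeFactor H (Subgroup.closure (↑H ∪ {FreeGroup.mk (u ++ v)})) ∧
        ∀ C : Set (FreeGroup A), IsFreeBasis C H →
          IsFreeBasis (C ∪ {FreeGroup.mk (u ++ v)})
            (Subgroup.closure (↑H ∪ {FreeGroup.mk (u ++ v)}))) := by
  have hlang := hH ▸ hstep.langRho_eq_closure hd hred hu hv
  have hfg := hstep.fg hd hred hH hlang
  exact ⟨hstep.eStep hd hred hu hv, hlang, rk_closure_union_singleton_le hfg, fun hrk =>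
    ⟨freeFactor_closure_union_singleton hfg hrk, fun _ hC => hC.union_singleton hfg hrk⟩⟩

/-- Proposition 2.4: if `M →i^{p=q} N` with reduced words `u, v` labeling paths
`q →v q₀ →u p`, then `M →e^{uv} N` and `L(N)ρ = ⟨H, (uv)ρ⟩`; in particular
`rank L(N)ρ ≤ 1 + rank H`, and, in case of equality, `H ≤ff L(N)ρ` and any basis `C`
of `H` extends to the basis `C ∪ {(uv)ρ}` of `L(N)ρ`. -/
theorem istep_langRho_and_rank
    {A : Type} (M : Autom A) (hMinv : M.IsInv) (hMred : M.IsRed)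
    (H : Subgroup (FreeGroup A)) (hH : M.langRho = ↑H)
    (u v : List (Ltr A)) (hured : IsReducedWord u) (hvred : IsReducedWord v)
    (p q : M.Q) (hu : M.Path M.q0 u p) (hv : M.Path q v M.q0) (hpq : p ≠ q)
    (N : Autom A) (hstep : M.IStep p q N) :
    M.EStep (u ++ v) N ∧
    ∀ K : Subgroup (FreeGroup A),
      K = Subgroup.closure (↑H ∪ {FreeGroup.mk (u ++ v)}) →
      N.langRho = ↑K ∧
      rk K ≤ 1 + rk H ∧
      (rk K = 1 + rk H →
        FreeFactor H K ∧
        ∀ C : Set (FreeGroup A), IsFreeBasis C H →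
          IsFreeBasis (C ∪ {FreeGroup.mk (u ++ v)}) K) := by
  have general := istep_langRho_and_rank_general M hMinv.2.2 hMred H hH u v p q hu hv N hstep
  exact ⟨general.1, fun _ hK => hK ▸ general.2⟩
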